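/- Let W be a discrete memoryless channel with R_cr < C and let R ∈ (R_cr, C). If W is singular at rate R (i.e., for every Q with E_r(R,Q) = E_r(R), the pair (Q,W) is singular), then there exists a constant K₃ > 0, depending only on W and R, such that for every positive integer N there exists an (N,R) code (f,φ) with maximal error probability P_e(f,φ) ≤ (K₃/√N) · e^{−N·E_r(R)}. -/

import Mathlib

open Real BigOperators
open scoped Classical

namespace RCB

/-- A probability distribution on a finite alphabet. -/
def IsDist {α : Type*} [Fintype α] (Q : α → ℝ) : Prop :=
  (∀ a, 0 ≤ Q a) ∧ ∑ a, Q a = 1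

/-- A discrete memoryless channel, i.e. a stochastic matrix from `X` to `Y`. -/
def IsChannel {X Y : Type*} [Fintype X] [Fintype Y] (W : X → Y → ℝ) : Prop :=
  (∀ x y, 0 ≤ W x y) ∧ ∀ x, ∑ y, W x y = 1

/-- The Gallager function `E_o(ρ, Q)`. -/
noncomputable def Eo {X Y : Type*} [Fintype X] [Fintype Y]
    (W : X → Y → ℝ) (ρ : ℝ) (Q : X → ℝ) : ℝ :=
  - Real.log (∑ y, (∑ x, Q x * W x y ^ (1 / (1 + ρ))) ^ (1 + ρ))

/-- The random coding exponent `E_r(R, Q)` for input distribution `Q`. -/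
noncomputable def ErQ {X Y : Type*} [Fintype X] [Fintype Y]
    (W : X → Y → ℝ) (R : ℝ) (Q : X → ℝ) : ℝ :=
  sSup ((fun ρ => -ρ * R + Eo W ρ Q) '' Set.Icc (0 : ℝ) 1)

/-- The random coding exponent `E_r(R)`. -/
noncomputable def Er {X Y : Type*} [Fintype X] [Fintype Y]
    (W : X → Y → ℝ) (R : ℝ) : ℝ :=
  sSup {v : ℝ | ∃ Q : X → ℝ, IsDist Q ∧ v = ErQ W R Q}

/-- The mutual information `I(Q; W)` (natural logarithm). -/
noncomputable def MI {X Y : Type*} [Fintype X] [Fintype Y]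
    (W : X → Y → ℝ) (Q : X → ℝ) : ℝ :=
  ∑ x, ∑ y, Q x * W x y * Real.log (W x y / ∑ x', Q x' * W x' y)

/-- The capacity `C = max_Q I(Q;W)`. -/
noncomputable def Capacity {X Y : Type*} [Fintype X] [Fintype Y]
    (W : X → Y → ℝ) : ℝ :=
  sSup {v : ℝ | ∃ Q : X → ℝ, IsDist Q ∧ v = MI W Q}

/-- The critical rate of the input distribution `Q`:
`R_cr(Q) = ∂E_o(ρ,Q)/∂ρ |_{ρ=1}`. -/
noncomputable def RcrQ {X Y : Type*} [Fintype X] [Fintype Y]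
    (W : X → Y → ℝ) (Q : X → ℝ) : ℝ :=
  deriv (fun ρ => Eo W ρ Q) 1

/-- The critical rate of the channel: the largest `R` with
`E_r(R) = -R + max_Q E_o(1,Q)`. -/
noncomputable def Rcr {X Y : Type*} [Fintype X] [Fintype Y]
    (W : X → Y → ℝ) : ℝ :=
  sSup {R : ℝ | Er W R = -R + sSup {v : ℝ | ∃ Q : X → ℝ, IsDist Q ∧ v = Eo W 1 Q}}

/-- The rate `R_∞ = inf {R ≥ 0 : E_SP(R) < ∞}` (finiteness of the
sphere-packing exponent expressed as boundedness of the family of affine maps). -/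
noncomputable def Rinf {X Y : Type*} [Fintype X] [Fintype Y]
    (W : X → Y → ℝ) : ℝ :=
  sInf {R : ℝ | 0 ≤ R ∧
    BddAbove {v : ℝ | ∃ (Q : X → ℝ) (ρ : ℝ), IsDist Q ∧ 0 ≤ ρ ∧ v = -ρ * R + Eo W ρ Q}}

/-- The pair `(Q, W)` is singular if `W(y|x) = W(y|z)` whenever
`Q(x)W(y|x)Q(z)W(y|z) > 0`. -/
def Singular {X Y : Type*} (W : X → Y → ℝ) (Q : X → ℝ) : Prop :=
  ∀ x y z, 0 < Q x * W x y * (Q z * W z y) → W x y = W z y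

/-- `ρ^*_R(Q) = -∂E_r(a,Q)/∂a |_{a=R}`. -/
noncomputable def rhoStarQ {X Y : Type*} [Fintype X] [Fintype Y]
    (W : X → Y → ℝ) (Q : X → ℝ) (R : ℝ) : ℝ :=
  - deriv (fun a => ErQ W a Q) R

/-- The number of messages of an `(N, R)` code: `⌈exp (N R)⌉`. -/
noncomputable def nMsgs (N : ℕ) (R : ℝ) : ℕ := ⌈Real.exp (N * R)⌉₊

/-- The `N`-fold memoryless extension of the channel `W`. -/
noncomputable def Wn {X Y : Type*} (W : X → Y → ℝ) {N : ℕ}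
    (c : Fin N → X) (y : Fin N → Y) : ℝ :=
  ∏ n, W (c n) (y n)

/-- The maximal error probability of the code `(f, φ)` over the `N`-fold
memoryless extension of `W`. -/
noncomputable def Pmax {X Y : Type*} [Fintype X] [Fintype Y] {M N : ℕ}
    (W : X → Y → ℝ) (f : Fin M → Fin N → X) (φ : (Fin N → Y) → Fin M) : ℝ :=
  ⨆ m : Fin M, ∑ y : Fin N → Y, Wn W (f m) y * (if φ y ≠ m then (1 : ℝ) else 0)

/-- The ensemble average error probability `P̄_e(Q, N, R)`: the `⌈exp (N R)⌉`
codewords are drawn i.i.d. from `Q^N` and decoded by maximum-likelihood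
decoding, ties counted as errors. -/
noncomputable def Pbar {X Y : Type*} [Fintype X] [Fintype Y]
    (W : X → Y → ℝ) (Q : X → ℝ) (N : ℕ) (R : ℝ) : ℝ :=
  ∑ c : Fin (nMsgs N R) → Fin N → X,
    (∏ m, ∏ n, Q (c m n)) *
      ((nMsgs N R : ℝ)⁻¹ *
        ∑ m, ∑ y : Fin N → Y,
          Wn W (c m) y *
            (if ∃ m', m' ≠ m ∧ Wn W (c m) y ≤ Wn W (c m') y then (1 : ℝ) else 0))

/-- The tilted output distribution `f_ρ`. -/
noncomputable def fRho {X Y : Type*} [Fintype X] [Fintype Y]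
    (W : X → Y → ℝ) (Q : X → ℝ) (ρ : ℝ) (y : Y) : ℝ :=
  (∑ x, Q x * W x y ^ (1 / (1 + ρ))) ^ (1 + ρ) /
    ∑ b, (∑ a, Q a * W a b ^ (1 / (1 + ρ))) ^ (1 + ρ)

/-- The cumulant generating function
`Λ_ρ(λ) = log E_{P_{X,Y}}[exp(λ log (f_ρ(Y)/W(Y|X)))]` with `P_{X,Y} = Q × W`. -/
noncomputable def Lam {X Y : Type*} [Fintype X] [Fintype Y]
    (W : X → Y → ℝ) (Q : X → ℝ) (ρ : ℝ) (t : ℝ) : ℝ :=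
  Real.log (∑ x, ∑ y, Q x * W x y * Real.exp (t * Real.log (fRho W Q ρ y / W x y)))

/-- `P_{X,Y,Z}(S̃_Q)` where `P_{X,Y,Z}(x,y,z) = Q(x)W(y|x)Q(z)` and
`S̃_Q = {(x,y,z) : Q(x)W(y|x)Q(z)W(y|z) > 0}`. -/
noncomputable def PStilde {X Y : Type*} [Fintype X] [Fintype Y]
    (W : X → Y → ℝ) (Q : X → ℝ) : ℝ :=
  ∑ x, ∑ y, ∑ z,
    if 0 < Q x * W x y * (Q z * W z y) then Q x * W x y * Q z else 0

/-- The bivariate cumulant generating function `Λ_{1,ρ}(v)` with respect to the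
conditional distribution `P̃_{X,Y,Z}` of `P_{X,Y,Z}` given `S̃_Q`. -/
noncomputable def Lam1 {X Y : Type*} [Fintype X] [Fintype Y]
    (W : X → Y → ℝ) (Q : X → ℝ) (ρ : ℝ) (v : ℝ × ℝ) : ℝ :=
  Real.log ((∑ x, ∑ y, ∑ z,
    if 0 < Q x * W x y * (Q z * W z y) then
      Q x * W x y * Q z *
        Real.exp (v.1 * Real.log (W x y / fRho W Q ρ y) +
          v.2 * Real.log (W z y / W x y))
    else 0) / PStilde W Q)

/-- The subdifferential of `f : ℝ → ℝ` at `R` (for convex `f`). -/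
def Subderiv (f : ℝ → ℝ) (R : ℝ) : Set ℝ :=
  {g : ℝ | ∀ x, f R + g * (x - R) ≤ f x}

/-- The tilted backward channel `P^ρ_{X|Y}`. -/
noncomputable def PXgY {X Y : Type*} [Fintype X]
    (W : X → Y → ℝ) (Q : X → ℝ) (ρ : ℝ) (x : X) (y : Y) : ℝ :=
  Q x * W x y ^ (1 / (1 + ρ)) / ∑ a, Q a * W a y ^ (1 / (1 + ρ))

/-- The tilted joint distribution `P^ρ_{X,Y}(x,y) = P^ρ_{X|Y}(x|y) P^ρ_Y(y)`. -/
noncomputable def PXY {X Y : Type*} [Fintype X] [Fintype Y]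
    (W : X → Y → ℝ) (Q : X → ℝ) (ρ : ℝ) (x : X) (y : Y) : ℝ :=
  PXgY W Q ρ x y * fRho W Q ρ y

lemma centralBinom_sq_mul_le (n : ℕ) : n.centralBinom ^ 2 * (2 * n + 1) ≤ 16 ^ n := by
  induction n with
  | zero => simp
  | succ n ih =>
    have h := Nat.succ_mul_centralBinom_succ n
    have h2 : (n + 1) ^ 2 * ((n + 1).centralBinom ^ 2 * (2 * (n + 1) + 1))
        ≤ (n + 1) ^ 2 * 16 ^ (n + 1) := by
      calc (n + 1) ^ 2 * ((n + 1).centralBinom ^ 2 * (2 * (n + 1) + 1))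
          = ((n + 1) * (n + 1).centralBinom) ^ 2 * (2 * (n + 1) + 1) := by ring
        _ = (n.centralBinom ^ 2 * (2 * n + 1)) * (4 * (2 * n + 1) * (2 * n + 3)) := by
          rw [h]; ring
        _ ≤ 16 ^ n * (16 * (n + 1) ^ 2) := by
          refine Nat.mul_le_mul ih ?_
          nlinarith
        _ = (n + 1) ^ 2 * 16 ^ (n + 1) := by ring
    exact Nat.le_of_mul_le_mul_left h2 (by positivity)

lemma choose_sq_mul_le (J k : ℕ) : J.choose k ^ 2 * (J + 1) ≤ 4 ^ J := by
  have hmid : J.choose k ≤ J.choose (J / 2) := Nat.choose_le_middle k J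
  refine (Nat.mul_le_mul_right _ (Nat.pow_le_pow_left hmid 2)).trans ?_
  obtain ⟨n, rfl | rfl⟩ := Nat.even_or_odd' J
  · have := centralBinom_sq_mul_le n
    rw [Nat.centralBinom_eq_two_mul_choose] at this
    rw [Nat.mul_div_cancel_left _ (by norm_num), pow_mul]
    simpa using this
  · have := centralBinom_sq_mul_le (n + 1)
    have hdiv : (2 * n + 1) / 2 = n := by omega
    have hc : (n + 1).centralBinom = 2 * (2 * n + 1).choose n := by
      rw [Nat.centralBinom_eq_two_mul_choose, show 2 * (n + 1) = (2 * n + 1) + 1 by ring,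
        Nat.choose_succ_succ, Nat.choose_symm_half]
      ring
    rw [hdiv]
    rw [hc] at this
    have e : 4 * 4 ^ (2 * n + 1) = 16 ^ (n + 1) := by
      rw [show (16 : ℕ) = 4 ^ 2 by norm_num, ← pow_mul]; ring
    nlinarith

lemma choose_le_two_pow_div_sqrt (J k : ℕ) :
    (J.choose k : ℝ) ≤ 2 ^ J / √(J + 1 : ℝ) := by
  have h : ((J.choose k : ℝ)) ^ 2 * (J + 1) ≤ 4 ^ J := by exact_mod_cast choose_sq_mul_le J k
  rw [le_div_iff₀ (by positivity)]
  refine (pow_le_pow_iff_left₀ (by positivity) (by positivity) two_ne_zero).1 ?_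
  rw [mul_pow, Real.sq_sqrt (by positivity), ← pow_mul, mul_comm J 2, pow_mul]
  norm_num
  exact h

/-- The expectation of `1 / √(J + 1)` for a binomial variable `J` with parameters `N`, `θ`. -/
lemma sum_binomial_div_sqrt_le (N : ℕ) {θ : ℝ} (h0 : 0 < θ) (h1 : θ ≤ 1) :
    ∑ j ∈ Finset.range (N + 1), θ ^ j * (1 - θ) ^ (N - j) * (N.choose j : ℝ) / √(j + 1 : ℝ)
      ≤ 1 / √((N + 1) * θ) := by
  set a : ℝ := (N + 1) * θ with ha
  have hapos : 0 < a := by positivity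
  have hw : ∀ j, 0 ≤ θ ^ j * (1 - θ) ^ (N - j) * (N.choose j : ℝ) := fun j => by
    have : 0 ≤ 1 - θ := by linarith
    positivity
  have hsum : ∑ j ∈ Finset.range (N + 1), θ ^ j * (1 - θ) ^ (N - j) * (N.choose j : ℝ) = 1 := by
    rw [← add_pow]; simp
  have hinv : a * ∑ j ∈ Finset.range (N + 1),
      θ ^ j * (1 - θ) ^ (N - j) * (N.choose j : ℝ) / (j + 1) ≤ 1 := by
    have hb : ∑ j ∈ Finset.range (N + 1 + 1),
        θ ^ j * (1 - θ) ^ (N + 1 - j) * ((N + 1).choose j : ℝ) = 1 := by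
      rw [← add_pow]; simp
    rw [Finset.sum_range_succ'] at hb
    have hlast : 0 ≤ θ ^ 0 * (1 - θ) ^ (N + 1 - 0) * ((N + 1).choose 0 : ℝ) := by
      have : 0 ≤ 1 - θ := by linarith
      positivity
    have heq : a * ∑ j ∈ Finset.range (N + 1),
        θ ^ j * (1 - θ) ^ (N - j) * (N.choose j : ℝ) / (j + 1)
        = ∑ j ∈ Finset.range (N + 1),
          θ ^ (j + 1) * (1 - θ) ^ (N + 1 - (j + 1)) * ((N + 1).choose (j + 1) : ℝ) := by
      rw [Finset.mul_sum]
      refine Finset.sum_congr rfl fun j _ => ?_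
      have hc : ((N : ℝ) + 1) * N.choose j = (N + 1).choose (j + 1) * (j + 1) := by
        exact_mod_cast Nat.add_one_mul_choose_eq N j
      rw [Nat.add_sub_add_right, ha]
      have hj : (j : ℝ) + 1 ≠ 0 := by positivity
      rw [mul_div_assoc', div_eq_iff hj, pow_succ]
      linear_combination θ * θ ^ j * (1 - θ) ^ (N - j) * hc
    rw [heq]
    linarith
  have hterm : ∀ j : ℕ, 1 / √(j + 1 : ℝ) ≤ 1 / √a * (1 / 2) * (1 + a * (1 / (j + 1))) := by
    intro j
    have hj : (0 : ℝ) < j + 1 := by positivity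
    have hs := Real.sq_sqrt hj.le
    have ht := Real.sq_sqrt hapos.le
    have hsp := Real.sqrt_pos.2 hj
    have htp := Real.sqrt_pos.2 hapos
    set s := √(j + 1 : ℝ)
    set t := √a
    rw [← hs, ← ht]
    field_simp
    nlinarith [sq_nonneg (s - t)]
  calc _ ≤ ∑ j ∈ Finset.range (N + 1), 1 / √a * (1 / 2) *
        (θ ^ j * (1 - θ) ^ (N - j) * (N.choose j : ℝ)
          + a * (θ ^ j * (1 - θ) ^ (N - j) * (N.choose j : ℝ) / (j + 1))) := by
        refine Finset.sum_le_sum fun j _ => ?_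
        have := mul_le_mul_of_nonneg_left (hterm j) (hw j)
        calc _ = θ ^ j * (1 - θ) ^ (N - j) * (N.choose j : ℝ) * (1 / √(j + 1 : ℝ)) := by ring
          _ ≤ _ := this
          _ = _ := by ring
    _ = 1 / √a * (1 / 2) * (1 + a * ∑ j ∈ Finset.range (N + 1),
          θ ^ j * (1 - θ) ^ (N - j) * (N.choose j : ℝ) / (j + 1)) := by
        rw [← Finset.mul_sum, Finset.sum_add_distrib, hsum, ← Finset.mul_sum]
    _ ≤ 1 / √a * (1 / 2) * (1 + 1) := by gcongr
    _ = 1 / √a := by ring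

lemma exists_sum_exp_neg_abs_le {δ d : ℝ} (hδ : 0 < δ) (hd : 0 < d) :
    ∃ H : ℝ, 0 < H ∧ ∀ (c : ℝ) (n : ℕ),
      ∑ k ∈ Finset.range n, exp (-δ * |c + k * d|) ≤ H := by
  have hr0 : 0 < exp (-(δ * d)) := exp_pos _
  have hr1 : exp (-(δ * d)) < 1 := by rw [exp_lt_one_iff]; nlinarith [mul_pos hδ hd]
  have hnat : Summable fun n : ℕ => exp (-(δ * d)) ^ n := summable_geometric_of_lt_one hr0.le hr1
  have hsum : Summable fun j : ℤ => exp (-(δ * d)) ^ j.natAbs :=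
    Summable.of_nat_of_neg (by simpa using hnat) (by simpa using hnat)
  refine ⟨exp (δ * d) * ∑' j : ℤ, exp (-(δ * d)) ^ j.natAbs, ?_, fun c n => ?_⟩
  · have : 0 < ∑' j : ℤ, exp (-(δ * d)) ^ j.natAbs :=
      hsum.tsum_pos (fun j => by positivity) 0 (by positivity)
    positivity
  · set k₀ : ℤ := ⌊-c / d⌋
    have hterm : ∀ k : ℕ, exp (-δ * |c + k * d|)
        ≤ exp (δ * d) * exp (-(δ * d)) ^ ((k : ℤ) - k₀).natAbs := by
      intro k
      rw [← exp_nat_mul, ← exp_add, exp_le_exp]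
      have habs : ((((k : ℤ) - k₀).natAbs : ℕ) : ℝ) = |(k : ℝ) - k₀| := by
        rw [Nat.cast_natAbs]; push_cast; rfl
      rw [habs]
      have h1 : (k₀ : ℝ) * d ≤ -c := by
        have := Int.floor_le (-c / d)
        rwa [le_div_iff₀ hd] at this
      have h2 : -c < (k₀ + 1 : ℝ) * d := by
        have := Int.lt_floor_add_one (-c / d)
        rwa [div_lt_iff₀ hd] at this
      have h3 : |(k : ℝ) - k₀| * d ≤ |c + k * d| + d := by
        rw [← abs_of_pos hd, ← abs_mul, abs_of_pos hd]
        have : ((k : ℝ) - k₀) * d = (c + k * d) + (-c - k₀ * d) := by ring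
        rw [this]
        refine (abs_add_le _ _).trans ?_
        gcongr
        rw [abs_of_nonneg (by linarith)]
        linarith
      nlinarith
    calc _ ≤ ∑ k ∈ Finset.range n, exp (δ * d) * exp (-(δ * d)) ^ ((k : ℤ) - k₀).natAbs :=
          Finset.sum_le_sum fun k _ => hterm k
      _ = exp (δ * d) * ∑ j ∈ (Finset.range n).image (fun k : ℕ => (k : ℤ) - k₀),
            exp (-(δ * d)) ^ j.natAbs := by
          rw [← Finset.mul_sum, Finset.sum_image]
          intro x _ y _ h
          simpa using h
      _ ≤ _ := by
          gcongr
          exact hsum.sum_le_tsum _ (fun j _ => by positivity)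

/-- The translation `h ↦ h (· + a)` on real functions. -/
def shift (a : ℝ) : Module.End ℝ (ℝ → ℝ) where
  toFun h s := h (s + a)
  map_add' _ _ := rfl
  map_smul' _ _ := rfl

@[simp] lemma shift_apply (a : ℝ) (h : ℝ → ℝ) (s : ℝ) : shift a h s = h (s + a) := rfl

lemma shift_commute (a b : ℝ) : Commute (shift a) (shift b) := by
  refine LinearMap.ext fun h => funext fun s => ?_
  simp only [Module.End.mul_apply, shift_apply]
  ring_nf

lemma shift_pow_apply (a : ℝ) (n : ℕ) (h : ℝ → ℝ) (s : ℝ) :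
    (shift a ^ n) h s = h (s + n * a) := by
  induction n generalizing s with
  | zero => simp
  | succ n ih =>
    rw [pow_succ', Module.End.mul_apply, shift_apply, ih]
    push_cast
    ring_nf

/-- The operator sending `h` to the weighted average of its translates. -/
noncomputable def avg {Y : Type*} [Fintype Y] (w v : Y → ℝ) : Module.End ℝ (ℝ → ℝ) :=
  ∑ y, w y • shift (v y)

lemma avg_apply {Y : Type*} [Fintype Y] (w v : Y → ℝ) (h : ℝ → ℝ) (s : ℝ) :
    avg w v h s = ∑ y, w y * h (s + v y) := by
  simp [avg, LinearMap.sum_apply, Finset.sum_apply]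

lemma avg_pow_apply {Y : Type*} [Fintype Y] (w v : Y → ℝ) (n : ℕ) (h : ℝ → ℝ) (s : ℝ) :
    (avg w v ^ n) h s = ∑ y : Fin n → Y, (∏ i, w (y i)) * h (s + ∑ i, v (y i)) := by
  induction n generalizing s with
  | zero => simp
  | succ n ih =>
    rw [pow_succ', Module.End.mul_apply, avg_apply]
    rw [← (Fin.consEquiv fun _ => Y).sum_comp, Fintype.sum_prod_type]
    refine Finset.sum_congr rfl fun y _ => ?_
    rw [ih, Finset.mul_sum]
    refine Finset.sum_congr rfl fun z _ => ?_
    simp [Fin.consEquiv, Fin.prod_univ_succ, Fin.sum_univ_succ, mul_assoc, add_assoc]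

lemma avg_pow_le {Y : Type*} [Fintype Y] {w v : Y → ℝ} (hw : ∀ y, 0 ≤ w y) {h : ℝ → ℝ} {C : ℝ}
    (hC : ∀ s, h s ≤ C) (n : ℕ) (s : ℝ) : (avg w v ^ n) h s ≤ (∑ y, w y) ^ n * C := by
  induction n generalizing s with
  | zero => simpa using hC s
  | succ n ih =>
    rw [pow_succ', Module.End.mul_apply, avg_apply, pow_succ', mul_assoc, Finset.sum_mul]
    exact Finset.sum_le_sum fun y _ => mul_le_mul_of_nonneg_left (ih _) (hw y)

lemma shift_add_pow_le {δ a b H : ℝ}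
    (hsum : ∀ (c : ℝ) (n : ℕ), ∑ k ∈ Finset.range n, exp (-δ * |c + k * (a - b)|) ≤ H)
    (J : ℕ) (s : ℝ) :
    ((shift a + shift b) ^ J) (fun s => exp (-δ * |s|)) s ≤ 2 ^ J / √(J + 1 : ℝ) * H := by
  rw [(shift_commute a b).add_pow]
  simp only [LinearMap.sum_apply, Finset.sum_apply]
  calc _ = ∑ k ∈ Finset.range (J + 1),
        (J.choose k : ℝ) * exp (-δ * |(s + J * b) + k * (a - b)|) := by
        refine Finset.sum_congr rfl fun k hk => ?_
        have hkJ : k ≤ J := Nat.lt_succ_iff.1 (Finset.mem_range.1 hk)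
        rw [← Nat.cast_comm, ← nsmul_eq_mul, ← Nat.cast_smul_eq_nsmul ℝ]
        simp only [LinearMap.smul_apply, Pi.smul_apply, Module.End.mul_apply, smul_eq_mul,
          shift_pow_apply]
        push_cast [Nat.cast_sub hkJ]
        ring_nf
    _ ≤ ∑ k ∈ Finset.range (J + 1),
        2 ^ J / √(J + 1 : ℝ) * exp (-δ * |(s + J * b) + k * (a - b)|) := by
        refine Finset.sum_le_sum fun k _ => ?_
        gcongr
        exact choose_le_two_pow_div_sqrt J k
    _ ≤ _ := by
        rw [← Finset.mul_sum]
        gcongr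
        exact hsum _ _


/-- Anti-concentration for sums of independent copies of a non-constant variable. -/
lemma exists_sum_exp_neg_abs_sum_le {Y : Type*} [Fintype Y] {w : Y → ℝ} (hw : IsDist w)
    (v : Y → ℝ) {y₁ y₂ : Y} (h₁ : 0 < w y₁) (h₂ : 0 < w y₂) (hv : v y₂ < v y₁)
    {δ : ℝ} (hδ : 0 < δ) :
    ∃ K : ℝ, 0 < K ∧ ∀ (N : ℕ) (c : ℝ), 0 < N →
      ∑ y : Fin N → Y, (∏ i, w (y i)) * exp (-δ * |c + ∑ i, v (y i)|) ≤ K / √N := by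
  obtain ⟨H, hH, hsum⟩ := exists_sum_exp_neg_abs_le hδ (sub_pos.2 hv)
  have hne : y₁ ≠ y₂ := by rintro rfl; exact lt_irrefl _ hv
  set κ := min (w y₁) (w y₂) with hκdef
  have hκ : 0 < κ := lt_min h₁ h₂
  set u : Y → ℝ := fun y => w y - ((if y = y₁ then κ else 0) + (if y = y₂ then κ else 0)) with hu
  have hu0 : ∀ y, 0 ≤ u y := by
    intro y
    have hκ₁ : κ ≤ w y₁ := min_le_left _ _
    have hκ₂ : κ ≤ w y₂ := min_le_right _ _
    have := hw.1 y
    simp only [hu]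
    split_ifs with ha hb hb
    · exact absurd (ha.symm.trans hb) hne
    · subst ha; linarith
    · subst hb; linarith
    · linarith
  have husum : ∑ y, u y = 1 - 2 * κ := by
    simp only [hu, Finset.sum_sub_distrib, Finset.sum_add_distrib, hw.2]
    simp
    ring
  have hθ1 : 2 * κ ≤ 1 := by
    have := Finset.sum_nonneg fun y (_ : y ∈ Finset.univ) => hu0 y
    linarith
  set L : Module.End ℝ (ℝ → ℝ) := shift (v y₁) + shift (v y₂) with hL
  have hdecomp : avg w v = κ • L + avg u v := by
    refine LinearMap.ext fun h => funext fun s => ?_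
    simp only [LinearMap.add_apply, LinearMap.smul_apply, Pi.add_apply, Pi.smul_apply, avg_apply,
      smul_eq_mul, hu, hL, shift_apply, sub_mul, add_mul, Finset.sum_sub_distrib,
      Finset.sum_add_distrib, ite_mul, zero_mul, Finset.sum_ite_eq', Finset.mem_univ, if_true]
    ring
  have hcomm : Commute (κ • L) (avg u v) := by
    refine Commute.smul_left ?_ κ
    refine Commute.sum_right _ _ _ fun y _ => Commute.smul_right ?_ _
    exact (shift_commute _ _).add_left (shift_commute _ _)
  have hsqκ : 0 < √(2 * κ) := Real.sqrt_pos.2 (by positivity)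
  refine ⟨H / √(2 * κ), by positivity, fun N c hN => ?_⟩
  have hNs : 0 < √(N : ℝ) := Real.sqrt_pos.2 (by exact_mod_cast hN)
  rw [← avg_pow_apply w v N (fun s => exp (-δ * |s|)) c, hdecomp, hcomm.add_pow]
  simp only [LinearMap.sum_apply, Finset.sum_apply]
  calc _ ≤ ∑ j ∈ Finset.range (N + 1),
        H * ((2 * κ) ^ j * (1 - 2 * κ) ^ (N - j) * (N.choose j : ℝ) / √(j + 1 : ℝ)) := by
        refine Finset.sum_le_sum fun j _ => ?_
        rw [← Nat.cast_comm, ← nsmul_eq_mul, ← Nat.cast_smul_eq_nsmul ℝ,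
          (hcomm.pow_pow j (N - j)).eq, smul_pow]
        simp only [LinearMap.smul_apply, Pi.smul_apply, Module.End.mul_apply, smul_eq_mul,
          map_smul]
        have hb := avg_pow_le (w := u) (v := v) hu0
          (fun s => shift_add_pow_le hsum j s) (N - j) c
        rw [husum] at hb
        calc _ ≤ (N.choose j : ℝ) * (κ ^ j * ((1 - 2 * κ) ^ (N - j) *
              (2 ^ j / √(j + 1 : ℝ) * H))) := by gcongr
          _ = _ := by rw [mul_pow]; ring
    _ ≤ H * (1 / √((N + 1) * (2 * κ))) := by
        rw [← Finset.mul_sum]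
        gcongr
        exact sum_binomial_div_sqrt_le N (by positivity) hθ1
    _ ≤ H * (1 / √(N * (2 * κ))) := by gcongr; linarith
    _ = _ := by rw [Real.sqrt_mul (by positivity)]; field_simp

lemma exists_le_of_sum_mul_le {A : Type*} [Fintype A] {P : A → ℝ} (hP : IsDist P) {g : A → ℝ}
    {t : ℝ} (h : ∑ a, P a * g a ≤ t) : ∃ a, g a ≤ t := by
  by_contra! hcon
  have hnn : ∀ a ∈ Finset.univ, 0 ≤ P a * (g a - t) := fun a _ =>
    mul_nonneg (hP.1 a) (sub_nonneg.2 (hcon a).le)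
  have hs : ∑ a, P a * (g a - t) = 0 := by
    refine le_antisymm ?_ (Finset.sum_nonneg hnn)
    simp only [mul_sub, Finset.sum_sub_distrib, ← Finset.sum_mul, hP.2]
    linarith
  have hz := (Finset.sum_eq_zero_iff_of_nonneg hnn).1 hs
  have : ∑ a, P a = 0 := Finset.sum_eq_zero fun a ha =>
    (mul_eq_zero.1 (hz a ha)).resolve_right (sub_pos.2 (hcon a)).ne'
  rw [hP.2] at this
  exact one_ne_zero this

/-- Greedy selection of codewords: if the test `D` has missed-detection probability at most `ε`
and false-alarm probability at most `ε / M` under random coding, there are `M` codewords all of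
whose error probabilities under sequential testing are at most `6 ε`. -/
lemma exists_codewords {A B : Type*} [Fintype A] [Fintype B] {P : A → ℝ} (hP : IsDist P)
    {V : A → B → ℝ} (hV : ∀ a b, 0 ≤ V a b) (D : A → B → Prop) {M : ℕ} {ε : ℝ}
    (hα : ∑ a, P a * ∑ b, V a b * (if D a b then 0 else 1) ≤ ε)
    (hβ : M * ∑ a, P a * ∑ b, (∑ a', P a' * V a' b) * (if D a b then 1 else 0) ≤ ε)
    (m : ℕ) (hm : m ≤ M) :
    ∃ f : ℕ → A, ∀ i < m,
      ∑ b, V (f i) b * (if D (f i) b ∧ ∀ j < i, ¬ D (f j) b then 0 else 1) ≤ 6 * ε ∧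
      M * ∑ b, (∑ a', P a' * V a' b) * (if D (f i) b then 1 else 0) ≤ 2 * ε := by
  set p : B → ℝ := fun b => ∑ a', P a' * V a' b with hp
  have hp0 : ∀ b, 0 ≤ p b := fun b => Finset.sum_nonneg fun a _ => mul_nonneg (hP.1 a) (hV a b)
  have hε : 0 ≤ ε := by
    refine le_trans (Finset.sum_nonneg fun a _ => mul_nonneg (hP.1 a)
      (Finset.sum_nonneg fun b _ => mul_nonneg (hV a b) ?_)) hα
    split_ifs <;> simp
  induction m with
  | zero =>
    obtain ⟨a, -⟩ := exists_le_of_sum_mul_le (g := fun _ => 0) hP (t := 0) (by simp)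
    exact ⟨fun _ => a, fun i hi => absurd hi (Nat.not_lt_zero i)⟩
  | succ m ih =>
    obtain ⟨f, hf⟩ := ih (Nat.le_of_succ_le hm)
    set miss : A → ℝ := fun a => ∑ b, V a b * (if D a b then 0 else 1) with hmiss
    set conf : A → ℝ := fun a =>
      ∑ b, V a b * ∑ j ∈ Finset.range m, (if D (f j) b then 1 else 0) with hconf
    set fa : A → ℝ := fun a => ∑ b, p b * (if D a b then 1 else 0) with hfa
    have hmiss0 : ∀ a, 0 ≤ miss a := fun a => Finset.sum_nonneg fun b _ =>
      mul_nonneg (hV a b) (by split_ifs <;> simp)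
    have hconf0 : ∀ a, 0 ≤ conf a := fun a => Finset.sum_nonneg fun b _ =>
      mul_nonneg (hV a b) (Finset.sum_nonneg fun j _ => by split_ifs <;> simp)
    have hfa0 : ∀ a, 0 ≤ fa a := fun a => Finset.sum_nonneg fun b _ =>
      mul_nonneg (hp0 b) (by split_ifs <;> simp)
    have hMpos : (0 : ℝ) < M := by exact_mod_cast (Nat.succ_pos m).trans_le hm
    have hconf_mean : ∑ a, P a * conf a ≤ 2 * ε := by
      have hswap : ∑ a, P a * conf a = ∑ j ∈ Finset.range m, fa (f j) := by
        simp only [hconf, hfa, hp, Finset.mul_sum, Finset.sum_mul]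
        rw [Finset.sum_comm' (t' := Finset.univ) (s' := fun _ => Finset.univ) (by simp)]
        rw [Finset.sum_comm' (s := Finset.range m) (t := fun _ => Finset.univ)
          (t' := Finset.univ) (s' := fun _ => Finset.range m) (by simp)]
        refine Finset.sum_congr rfl fun b _ => ?_
        rw [Finset.sum_comm]
        exact Finset.sum_congr rfl fun j _ => Finset.sum_congr rfl fun a _ => by ring
      rw [hswap]
      have hle : ∀ j ∈ Finset.range m, fa (f j) ≤ 2 * ε / M := fun j hj => by
        rw [le_div_iff₀ hMpos, mul_comm]
        exact (hf j (Finset.mem_range.1 hj)).2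
      refine (Finset.sum_le_card_nsmul _ _ _ hle).trans ?_
      rw [Finset.card_range, nsmul_eq_mul, mul_div_assoc', div_le_iff₀ hMpos, mul_comm]
      have : (m : ℝ) ≤ M := by exact_mod_cast Nat.le_of_succ_le hm
      gcongr
    obtain ⟨x, hx⟩ := exists_le_of_sum_mul_le hP (t := 6 * ε)
      (g := fun a => miss a + conf a + 3 * (M * fa a)) (by
        have h3 : ∑ a, P a * (3 * (M * fa a)) = 3 * (M * ∑ a, P a * fa a) := by
          simp only [Finset.mul_sum]
          exact Finset.sum_congr rfl fun a _ => by ring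
        simp only [mul_add, Finset.sum_add_distrib, h3]
        linarith)
    have hxfa : 0 ≤ M * fa x := mul_nonneg hMpos.le (hfa0 x)
    refine ⟨Function.update f m x, fun i hi => ?_⟩
    have hupd : ∀ j < m, Function.update f m x j = f j := fun j hj =>
      Function.update_of_ne hj.ne _ _
    rcases Nat.lt_succ_iff_lt_or_eq.1 hi with him | rfl
    · rw [hupd i him]
      refine ⟨?_, (hf i him).2⟩
      have hiff : ∀ b, (∀ j < i, ¬ D (Function.update f m x j) b) ↔ ∀ j < i, ¬ D (f j) b :=
        fun b => forall₂_congr fun j hj => by rw [hupd j (hj.trans him)]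
      simp only [hiff]
      exact (hf i him).1
    · rw [Function.update_self]
      refine ⟨?_, ?_⟩
      · refine le_trans ?_ (show miss x + conf x ≤ 6 * ε by linarith)
        simp only [hmiss, hconf, ← Finset.sum_add_distrib, ← mul_add]
        refine Finset.sum_le_sum fun b _ => mul_le_mul_of_nonneg_left ?_ (hV x b)
        have hnn : ∀ j ∈ Finset.range i, (0 : ℝ) ≤ if D (f j) b then 1 else 0 :=
          fun j _ => by split_ifs <;> simp
        have hnn' := Finset.sum_nonneg hnn
        split_ifs with h1 h2 h2
        · simp
        · linarith [h1.1]
        · have : ∃ j < i, D (f j) b := by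
            by_contra! hcon
            exact h1 ⟨h2, fun j hj => by rw [hupd j hj]; exact hcon j hj⟩
          obtain ⟨j, hj, hD⟩ := this
          have := Finset.single_le_sum hnn (Finset.mem_range.2 hj)
          rw [if_pos hD] at this
          linarith
        · linarith
      · have := hmiss0 x
        have := hconf0 x
        linarith

lemma exists_code {A B : Type*} [Fintype A] [Fintype B] {P : A → ℝ} (hP : IsDist P)
    {V : A → B → ℝ} (hV : ∀ a b, 0 ≤ V a b) (D : A → B → Prop) {M : ℕ} (hM : 0 < M) {ε : ℝ}
    (hα : ∑ a, P a * ∑ b, V a b * (if D a b then 0 else 1) ≤ ε)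
    (hβ : M * ∑ a, P a * ∑ b, (∑ a', P a' * V a' b) * (if D a b then 1 else 0) ≤ ε) :
    ∃ (f : Fin M → A) (φ : B → Fin M), ∀ m,
      ∑ b, V (f m) b * (if φ b ≠ m then 1 else 0) ≤ 6 * ε := by
  obtain ⟨f, hf⟩ := exists_codewords hP hV D hα hβ M le_rfl
  refine ⟨fun m => f m, fun b =>
    if h : ∃ i, i < M ∧ D (f i) b then ⟨Nat.find h, (Nat.find_spec h).1⟩ else ⟨0, hM⟩,
    fun m => le_trans ?_ (hf m m.2).1⟩
  refine Finset.sum_le_sum fun b _ => mul_le_mul_of_nonneg_left ?_ (hV _ b)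
  by_cases hD : D (f m) b ∧ ∀ j < (m : ℕ), ¬ D (f j) b
  · have hex : ∃ i, i < M ∧ D (f i) b := ⟨m, m.2, hD.1⟩
    have hfind : Nat.find hex = m :=
      (Nat.find_eq_iff hex).2 ⟨⟨m.2, hD.1⟩, fun j hj h => hD.2 j hj h.2⟩
    rw [if_pos hD]
    simp only [dif_pos hex]
    rw [if_neg (not_not.2 (Fin.ext hfind))]
  · rw [if_neg hD]
    split_ifs <;> norm_num

lemma sum_prod_eq_prod_sum {X : Type*} [Fintype X] {N : ℕ} (g : Fin N → X → ℝ) :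
    ∑ c : Fin N → X, ∏ n, g n (c n) = ∏ n, ∑ x, g n x := by
  rw [Finset.prod_univ_sum, Fintype.piFinset_univ]

lemma min_one_le_rpow_mul_exp {t ρ δ : ℝ} (ht : 0 < t) (h₁ : δ ≤ ρ) (h₂ : ρ + δ ≤ 1) :
    (if t < 1 then t else 1) ≤ t ^ ρ * exp (-δ * |log t|) := by
  rw [rpow_def_of_pos ht, ← exp_add]
  split_ifs with h
  · have hl := log_neg ht h
    rw [abs_of_neg hl, ← exp_log ht, exp_le_exp, log_exp]
    nlinarith
  · have hl := log_nonneg (not_lt.1 h)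
    rw [abs_of_nonneg hl, ← exp_zero, exp_le_exp]
    nlinarith

/-- Change of measure together with anti-concentration: the refined Chernoff-type bound. -/
lemma exists_sum_min_one_le {Y : Type*} [Fintype Y] {p q : Y → ℝ} (hp : IsDist p)
    (hq : ∀ y, 0 ≤ q y) (hpq : ∀ y, 0 < p y → 0 < q y) {y₁ y₂ : Y} (h₁ : 0 < p y₁)
    (h₂ : 0 < p y₂) (hlt : q y₂ < q y₁) {ρ : ℝ} (hρ₀ : 0 < ρ) (hρ₁ : ρ < 1) (R : ℝ) :
    ∃ K : ℝ, 0 < K ∧ ∀ N : ℕ, 0 < N →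
      ∑ y : Fin N → Y, (∏ n, p (y n)) *
        (if exp (N * R) * ∏ n, q (y n) < 1 then exp (N * R) * ∏ n, q (y n) else 1)
      ≤ K / √N * exp (-(N : ℝ) * (-ρ * R + -log (∑ y, p y * q y ^ ρ))) := by
  set Z := ∑ y, p y * q y ^ ρ with hZdef
  have hterm0 : ∀ y, 0 ≤ p y * q y ^ ρ := fun y => mul_nonneg (hp.1 y) (rpow_nonneg (hq y) _)
  have hterm_pos : ∀ y, 0 < p y → 0 < p y * q y ^ ρ := fun y hy =>
    mul_pos hy (rpow_pos_of_pos (hpq y hy) _)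
  have hZ : 0 < Z :=
    Finset.sum_pos' (fun y _ => hterm0 y) ⟨y₁, Finset.mem_univ _, hterm_pos y₁ h₁⟩
  have hw : IsDist fun y => p y * q y ^ ρ / Z :=
    ⟨fun y => div_nonneg (hterm0 y) hZ.le, by rw [← Finset.sum_div, ← hZdef, div_self hZ.ne']⟩
  have hδ : 0 < min ρ (1 - ρ) := lt_min hρ₀ (by linarith)
  obtain ⟨K, hK, hbound⟩ := exists_sum_exp_neg_abs_sum_le hw (fun y => log (q y))
    (y₁ := y₁) (y₂ := y₂)
    (div_pos (hterm_pos _ h₁) hZ) (div_pos (hterm_pos _ h₂) hZ)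
    (log_lt_log (hpq _ h₂) hlt) hδ
  refine ⟨K, hK, fun N hN => ?_⟩
  set δ := min ρ (1 - ρ) with hδdef
  have hexp : exp (-(N : ℝ) * (-ρ * R + -log Z)) = exp (N * R) ^ ρ * Z ^ N := by
    rw [← exp_mul, ← exp_log (pow_pos hZ N), ← exp_add, log_pow]
    congr 1
    ring
  have hpt : ∀ y : Fin N → Y, (∏ n, p (y n)) *
        (if exp (N * R) * ∏ n, q (y n) < 1 then exp (N * R) * ∏ n, q (y n) else 1)
      ≤ exp (-(N : ℝ) * (-ρ * R + -log Z)) * ((∏ n, (p (y n) * q (y n) ^ ρ / Z)) *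
        exp (-δ * |N * R + ∑ n, log (q (y n))|)) := by
    intro y
    by_cases hall : ∀ n, 0 < p (y n)
    · have hqpos : 0 < ∏ n, q (y n) := Finset.prod_pos fun n _ => hpq _ (hall n)
      have htpos : 0 < exp (N * R) * ∏ n, q (y n) := by positivity
      have hm := min_one_le_rpow_mul_exp htpos (min_le_left ρ (1 - ρ))
        (by linarith [min_le_right ρ (1 - ρ)] : ρ + min ρ (1 - ρ) ≤ 1)
      have hlog : log (exp (N * R) * ∏ n, q (y n)) = N * R + ∑ n, log (q (y n)) := by
        rw [log_mul (exp_pos _).ne' hqpos.ne', log_exp,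
          log_prod (fun n _ => (hpq _ (hall n)).ne')]
      rw [hlog, ← hδdef] at hm
      refine (mul_le_mul_of_nonneg_left hm (Finset.prod_nonneg fun n _ => hp.1 (y n))).trans
        (le_of_eq ?_)
      rw [hexp, Finset.prod_div_distrib, Finset.prod_mul_distrib, Finset.prod_const,
        Finset.card_univ, Fintype.card_fin, mul_rpow (exp_pos _).le hqpos.le,
        ← Real.finsetProd_rpow _ _ (fun n _ => hq (y n))]
      have := (pow_pos hZ N).ne'
      field_simp
    · push Not at hall
      obtain ⟨n, hn⟩ := hall
      rw [Finset.prod_eq_zero (Finset.mem_univ n) (le_antisymm hn (hp.1 _)), zero_mul]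
      refine mul_nonneg (exp_pos _).le (mul_nonneg (Finset.prod_nonneg fun n _ => ?_)
        (exp_pos _).le)
      exact div_nonneg (hterm0 _) hZ.le
  refine (Finset.sum_le_sum fun y _ => hpt y).trans ?_
  rw [← Finset.mul_sum, mul_comm]
  gcongr
  exact hbound N (N * R) hN

section Channel

variable {X Y : Type*} [Fintype X] {W : X → Y → ℝ} {Q : X → ℝ}

/-- The output distribution of the channel `W` under the input distribution `Q`. -/
noncomputable def outDist (W : X → Y → ℝ) (Q : X → ℝ) (y : Y) : ℝ := ∑ x, Q x * W x y

/-- The `Q`-probability of the inputs compatible with the output `y`. -/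
noncomputable def supportMass (W : X → Y → ℝ) (Q : X → ℝ) (y : Y) : ℝ :=
  ∑ x, Q x * (if 0 < W x y then 1 else 0)

lemma supportMass_nonneg (hQ : IsDist Q) (y : Y) : 0 ≤ supportMass W Q y :=
  Finset.sum_nonneg fun x _ => mul_nonneg (hQ.1 x) (by split_ifs <;> simp)

variable [Fintype Y]

lemma isDist_outDist (hW : IsChannel W) (hQ : IsDist Q) : IsDist (outDist W Q) := by
  refine ⟨fun y => Finset.sum_nonneg fun x _ => mul_nonneg (hQ.1 x) (hW.1 x y), ?_⟩
  simp only [outDist]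
  rw [Finset.sum_comm]
  simp only [← Finset.mul_sum, hW.2, mul_one, hQ.2]

lemma exists_pos_of_outDist_pos (hW : IsChannel W) (hQ : IsDist Q) {y : Y}
    (hy : 0 < outDist W Q y) : ∃ x, 0 < Q x ∧ 0 < W x y := by
  obtain ⟨x, -, hx⟩ := Finset.exists_lt_of_sum_lt (s := Finset.univ) (f := fun _ : X => (0 : ℝ))
    (g := fun x => Q x * W x y) (by simpa [outDist] using hy)
  exact ⟨x, pos_of_mul_pos_left hx (hW.1 x y), pos_of_mul_pos_right hx (hQ.1 x)⟩

lemma supportMass_pos (hW : IsChannel W) (hQ : IsDist Q) {y : Y} (hy : 0 < outDist W Q y) :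
    0 < supportMass W Q y := by
  obtain ⟨x, hx, hxy⟩ := exists_pos_of_outDist_pos hW hQ hy
  exact Finset.sum_pos' (fun x _ => mul_nonneg (hQ.1 x) (by split_ifs <;> simp))
    ⟨x, Finset.mem_univ _, by simpa [hxy] using hx⟩

/-- For a singular pair the Gallager function only depends on the output distribution and the
support masses. -/
lemma Eo_eq_of_singular (hW : IsChannel W) (hQ : IsDist Q) (hs : Singular W Q) {ρ : ℝ}
    (hρ : 0 ≤ ρ) :
    Eo W ρ Q = -log (∑ y, outDist W Q y * supportMass W Q y ^ ρ) := by
  unfold Eo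
  congr 2
  refine Finset.sum_congr rfl fun y _ => ?_
  have h1ρ : 0 < 1 + ρ := by linarith
  rcases ((isDist_outDist hW hQ).1 y).eq_or_lt with hy | hy
  · have hz : ∀ x, Q x * W x y = 0 := fun x =>
      (Finset.sum_eq_zero_iff_of_nonneg fun x _ => mul_nonneg (hQ.1 x) (hW.1 x y)).1 hy.symm x
        (Finset.mem_univ x)
    rw [← hy, zero_mul, Finset.sum_eq_zero, zero_rpow h1ρ.ne']
    intro x _
    rcases mul_eq_zero.1 (hz x) with h | h
    · rw [h, zero_mul]
    · rw [h, zero_rpow (by positivity), mul_zero]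
  · obtain ⟨x₀, hx₀, hg⟩ := exists_pos_of_outDist_pos hW hQ hy
    have hval : ∀ x, ∀ s : ℝ, s ≠ 0 →
        Q x * W x y ^ s = Q x * (if 0 < W x y then 1 else 0) * W x₀ y ^ s := by
      intro x s hs0
      split_ifs with h
      · rcases (hQ.1 x).eq_or_lt with hx | hx
        · simp [← hx]
        · rw [hs x y x₀ (by positivity), mul_one]
      · rw [le_antisymm (not_lt.1 h) (hW.1 x y), zero_rpow hs0]
        simp
    have hout : outDist W Q y = supportMass W Q y * W x₀ y := by
      have := fun x => hval x 1 one_ne_zero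
      simp only [rpow_one] at this
      simp only [outDist, supportMass, this, Finset.sum_mul]
    have hsm := supportMass_pos hW hQ hy
    simp only [hval _ (1 / (1 + ρ)) (by positivity)]
    rw [← Finset.sum_mul, ← supportMass, mul_rpow hsm.le (by positivity), ← rpow_mul hg.le,
      one_div_mul_cancel h1ρ.ne', rpow_one, hout, add_comm 1 ρ, rpow_add_one hsm.ne']
    ring

/-- Codes for the memoryless extension whose decoder tests compatibility of the output with the
codeword. -/
lemma exists_memoryless_code (hW : IsChannel W) (hQ : IsDist Q) {N M : ℕ} (hM : 0 < M) {t ε : ℝ}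
    (ht : 0 ≤ t) (hMt : M ≤ 2 * t)
    (hε : ∑ y : Fin N → Y, (∏ n, outDist W Q (y n)) *
      (if t * ∏ n, supportMass W Q (y n) < 1 then t * ∏ n, supportMass W Q (y n) else 1) ≤ ε) :
    ∃ (f : Fin M → Fin N → X) (φ : (Fin N → Y) → Fin M), Pmax W f φ ≤ 12 * ε := by
  set p : (Fin N → Y) → ℝ := fun y => ∏ n, outDist W Q (y n) with hp
  set q : (Fin N → Y) → ℝ := fun y => ∏ n, supportMass W Q (y n) with hq
  have hp0 : ∀ y, 0 ≤ p y := fun y => Finset.prod_nonneg fun n _ => (isDist_outDist hW hQ).1 _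
  have hq0 : ∀ y, 0 ≤ q y := fun y => Finset.prod_nonneg fun n _ => supportMass_nonneg hQ _
  set P : (Fin N → X) → ℝ := fun c => ∏ n, Q (c n) with hPdef
  have hP : IsDist P := by
    refine ⟨fun c => Finset.prod_nonneg fun n _ => hQ.1 _, ?_⟩
    simp only [hPdef]
    rw [sum_prod_eq_prod_sum fun _ x => Q x]
    simp [hQ.2]
  have hV : ∀ (c : Fin N → X) (y : Fin N → Y), 0 ≤ Wn W c y := fun c y =>
    Finset.prod_nonneg fun n _ => hW.1 _ _
  have hPV : ∀ y, ∑ c, P c * Wn W c y = p y := fun y => by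
    simp only [hPdef, hp, Wn, ← Finset.prod_mul_distrib, outDist]
    exact sum_prod_eq_prod_sum fun n x => Q x * W x (y n)
  have hPq : ∀ y, ∑ c, P c * (if 0 < Wn W c y then 1 else 0) = q y := fun y => by
    have hind : ∀ c : Fin N → X, (if 0 < Wn W c y then (1 : ℝ) else 0)
        = ∏ n, if 0 < W (c n) (y n) then (1 : ℝ) else 0 := fun c => by
      by_cases h : ∀ n, 0 < W (c n) (y n)
      · rw [if_pos (show 0 < Wn W c y from Finset.prod_pos fun n _ => h n),
          Finset.prod_eq_one fun n _ => if_pos (h n)]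
      · push Not at h
        obtain ⟨n, hn⟩ := h
        rw [Finset.prod_eq_zero (Finset.mem_univ n) (if_neg hn.not_gt), if_neg]
        rw [Wn, Finset.prod_eq_zero (Finset.mem_univ n) (le_antisymm hn (hW.1 _ _))]
        exact lt_irrefl _
    simp only [hind, hPdef, hq, ← Finset.prod_mul_distrib, supportMass]
    exact sum_prod_eq_prod_sum fun n x => Q x * (if 0 < W x (y n) then 1 else 0)
  obtain ⟨D, hD⟩ : ∃ D : (Fin N → X) → (Fin N → Y) → Prop,
      ∀ c y, D c y ↔ 0 < Wn W c y ∧ t * q y < 1 := ⟨_, fun _ _ => Iff.rfl⟩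
  have hsplit : ∑ y, p y * (if t * q y < 1 then t * q y else 1)
      = ∑ y, p y * (if t * q y < 1 then 0 else 1)
        + t * ∑ y, p y * (q y * (if t * q y < 1 then 1 else 0)) := by
    rw [Finset.mul_sum, ← Finset.sum_add_distrib]
    refine Finset.sum_congr rfl fun y _ => ?_
    split_ifs <;> ring
  have hmiss : ∑ c, P c * ∑ y, Wn W c y * (if D c y then 0 else 1)
      = ∑ y, p y * (if t * q y < 1 then 0 else 1) := by
    simp only [Finset.mul_sum]
    rw [Finset.sum_comm]
    refine Finset.sum_congr rfl fun y _ => ?_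
    rw [← hPV, Finset.sum_mul]
    refine Finset.sum_congr rfl fun c _ => ?_
    rcases (hV c y).eq_or_lt with h | h
    · simp [← h]
    · by_cases hty : t * q y < 1 <;> simp [hD, h, hty]
  have hfa : ∑ c, P c * ∑ y, (∑ c', P c' * Wn W c' y) * (if D c y then 1 else 0)
      = ∑ y, p y * (q y * (if t * q y < 1 then 1 else 0)) := by
    simp only [Finset.mul_sum, hPV]
    rw [Finset.sum_comm]
    refine Finset.sum_congr rfl fun y _ => ?_
    have hcond : ∀ c, P c * (p y * (if D c y then 1 else 0)) =
        P c * (if 0 < Wn W c y then 1 else 0) * (p y * (if t * q y < 1 then 1 else 0)) := by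
      intro c
      by_cases hty : t * q y < 1 <;> by_cases hc : 0 < Wn W c y <;> simp [hD, hc, hty]
    simp only [hcond]
    rw [← Finset.sum_mul, hPq]
    ring
  have hmiss0 : 0 ≤ ∑ y, p y * (if t * q y < 1 then 0 else 1) :=
    Finset.sum_nonneg fun y _ => mul_nonneg (hp0 y) (by split_ifs <;> simp)
  have hfa0 : 0 ≤ ∑ y, p y * (q y * (if t * q y < 1 then 1 else 0)) :=
    Finset.sum_nonneg fun y _ => mul_nonneg (hp0 y) (mul_nonneg (hq0 y) (by split_ifs <;> simp))
  rw [hsplit] at hε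
  have htfa := mul_nonneg ht hfa0
  obtain ⟨f, φ, hf⟩ := exists_code hP hV D hM (ε := 2 * ε) (by rw [hmiss]; linarith) (by
    rw [hfa]
    have := mul_le_mul_of_nonneg_right hMt hfa0
    linarith)
  refine ⟨f, φ, ?_⟩
  have : Nonempty (Fin M) := ⟨⟨0, hM⟩⟩
  exact ciSup_le fun m => (hf m).trans_eq (by ring)

end Channel

section Exponent

variable {X Y : Type*} [Fintype X] [Fintype Y] {W : X → Y → ℝ} {Q : X → ℝ}

lemma gallager_sum_nonneg (hW : IsChannel W) (hQ : IsDist Q) (ρ : ℝ) (y : Y) :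
    0 ≤ ∑ x, Q x * W x y ^ (1 / (1 + ρ)) :=
  Finset.sum_nonneg fun x _ => mul_nonneg (hQ.1 x) (rpow_nonneg (hW.1 x y) _)

lemma gallager_pos (hW : IsChannel W) (hQ : IsDist Q) (ρ : ℝ) :
    0 < ∑ y, (∑ x, Q x * W x y ^ (1 / (1 + ρ))) ^ (1 + ρ) := by
  obtain ⟨x, -, hx⟩ := Finset.exists_lt_of_sum_lt (s := Finset.univ) (f := fun _ : X => (0 : ℝ))
    (g := Q) (by simp [hQ.2])
  obtain ⟨y, -, hy⟩ := Finset.exists_lt_of_sum_lt (s := Finset.univ) (f := fun _ : Y => (0 : ℝ))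
    (g := W x) (by simp [hW.2])
  refine Finset.sum_pos' (fun y _ => rpow_nonneg (gallager_sum_nonneg hW hQ ρ y) _)
    ⟨y, Finset.mem_univ _, rpow_pos_of_pos ?_ _⟩
  exact Finset.sum_pos' (fun x _ => mul_nonneg (hQ.1 x) (rpow_nonneg (hW.1 x y) _))
    ⟨x, Finset.mem_univ _, mul_pos hx (rpow_pos_of_pos hy _)⟩

lemma Eo_zero (hW : IsChannel W) (hQ : IsDist Q) : Eo W 0 Q = 0 := by
  simp only [Eo, add_zero, div_one, rpow_one]
  rw [Finset.sum_comm]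
  simp [← Finset.mul_sum, hW.2, hQ.2]

lemma continuousOn_Eo (hW : IsChannel W) :
    ContinuousOn (fun z : ℝ × (X → ℝ) => Eo W z.1 z.2) (Set.Icc 0 1 ×ˢ {Q | IsDist Q}) := by
  unfold Eo
  refine (ContinuousOn.log ?_ fun z hz => (gallager_pos hW hz.2 z.1).ne').neg
  have hpos : ∀ z ∈ (Set.Icc (0 : ℝ) 1 ×ˢ {Q : X → ℝ | IsDist Q}), 0 < 1 + z.1 :=
    fun z hz => by linarith [hz.1.1]
  refine continuousOn_finsetSum _ fun y _ => ContinuousOn.rpow ?_ (by fun_prop)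
    fun z hz => Or.inr (hpos z hz)
  refine continuousOn_finsetSum _ fun x _ => ContinuousOn.mul (by fun_prop) ?_
  refine ContinuousOn.rpow continuousOn_const ?_ fun z hz => Or.inr (by have := hpos z hz; positivity)
  exact continuousOn_const.div (by fun_prop) fun z hz => (hpos z hz).ne'

lemma exists_isMaxOn_exponent [Nonempty X] (hW : IsChannel W) (R : ℝ) :
    ∃ ρ ∈ Set.Icc (0 : ℝ) 1, ∃ Q : X → ℝ, IsDist Q ∧
      ∀ ρ' ∈ Set.Icc (0 : ℝ) 1, ∀ Q', IsDist Q' → -ρ' * R + Eo W ρ' Q' ≤ -ρ * R + Eo W ρ Q := by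
  have hcomp : IsCompact (Set.Icc (0 : ℝ) 1 ×ˢ {Q : X → ℝ | IsDist Q}) :=
    isCompact_Icc.prod (isCompact_stdSimplex ℝ X)
  have hne : (Set.Icc (0 : ℝ) 1 ×ˢ {Q : X → ℝ | IsDist Q}).Nonempty := by
    obtain ⟨x⟩ := ‹Nonempty X›
    exact ⟨(0, Pi.single x 1), by simp, single_mem_stdSimplex ℝ x⟩
  obtain ⟨z, hz, hmax⟩ := hcomp.exists_isMaxOn hne
    (f := fun z : ℝ × (X → ℝ) => -z.1 * R + Eo W z.1 z.2)
    (ContinuousOn.add (by fun_prop) (continuousOn_Eo hW))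
  exact ⟨z.1, hz.1, z.2, hz.2, fun ρ' hρ' Q' hQ' => hmax (a := (ρ', Q')) ⟨hρ', hQ'⟩⟩

lemma ErQ_eq_of_isMax {R ρ : ℝ} (hρ : ρ ∈ Set.Icc (0 : ℝ) 1)
    (hmax : ∀ ρ' ∈ Set.Icc (0 : ℝ) 1, -ρ' * R + Eo W ρ' Q ≤ -ρ * R + Eo W ρ Q) :
    ErQ W R Q = -ρ * R + Eo W ρ Q :=
  IsGreatest.csSup_eq ⟨⟨ρ, hρ, rfl⟩, by rintro _ ⟨ρ', hρ', rfl⟩; exact hmax ρ' hρ'⟩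

lemma Er_eq_of_isMax {R ρ : ℝ} (hρ : ρ ∈ Set.Icc (0 : ℝ) 1) (hQ : IsDist Q)
    (hmax : ∀ ρ' ∈ Set.Icc (0 : ℝ) 1, ∀ Q', IsDist Q' →
      -ρ' * R + Eo W ρ' Q' ≤ -ρ * R + Eo W ρ Q) :
    Er W R = -ρ * R + Eo W ρ Q := by
  refine IsGreatest.csSup_eq
    ⟨⟨Q, hQ, (ErQ_eq_of_isMax hρ fun ρ' hρ' => hmax ρ' hρ' Q hQ).symm⟩, ?_⟩
  rintro _ ⟨Q', hQ', rfl⟩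
  refine csSup_le (Set.Nonempty.image _ ⟨0, by simp⟩) ?_
  rintro _ ⟨ρ', hρ', rfl⟩
  exact hmax ρ' hρ' Q' hQ'

lemma Er_nonneg [Nonempty X] (hW : IsChannel W) (R : ℝ) : 0 ≤ Er W R := by
  obtain ⟨ρ, hρ, Q, hQ, hmax⟩ := exists_isMaxOn_exponent hW R
  rw [Er_eq_of_isMax hρ hQ hmax]
  simpa [Eo_zero hW hQ] using hmax 0 (by simp) Q hQ

lemma Er_ne_of_Rcr_lt [Nonempty X] (hW : IsChannel W) {R : ℝ} (hR : Rcr W < R) :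
    Er W R ≠ -R + sSup {v : ℝ | ∃ Q : X → ℝ, IsDist Q ∧ v = Eo W 1 Q} := by
  intro h
  refine hR.not_ge (le_csSup ⟨sSup {v : ℝ | ∃ Q : X → ℝ, IsDist Q ∧ v = Eo W 1 Q}, ?_⟩ h)
  intro R' hR'
  have := Er_nonneg hW R'
  rw [Set.mem_ofPred_eq] at hR'
  linarith

lemma hasDerivAt_gallager_term (hW : IsChannel W) (hQ : IsDist Q) (y : Y) :
    HasDerivAt (fun ρ : ℝ => (∑ x, Q x * W x y ^ (1 / (1 + ρ))) ^ (1 + ρ))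
      (-∑ x, Q x * W x y * log (W x y / ∑ x', Q x' * W x' y)) 0 := by
  have hinner : ∀ x, HasDerivAt (fun ρ : ℝ => Q x * W x y ^ (1 / (1 + ρ)))
      (-(Q x * W x y * log (W x y))) 0 := by
    intro x
    rcases (hW.1 x y).eq_or_lt with h | h
    · rw [← h]
      simp only [mul_zero, zero_mul, neg_zero]
      refine (hasDerivAt_const (0 : ℝ) (0 : ℝ)).congr_of_eventuallyEq ?_
      filter_upwards [lt_mem_nhds (show (-1 : ℝ) < 0 by norm_num)] with ρ hρ
      rw [zero_rpow (one_div_ne_zero (by linarith)), mul_zero]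
    · have hd : HasDerivAt (fun ρ : ℝ => 1 / (1 + ρ)) (-1) 0 := by
        simp only [one_div]
        exact (((hasDerivAt_id' (0 : ℝ)).const_add 1).fun_inv (by norm_num)).congr_deriv (by simp)
      refine ((hd.const_rpow h).const_mul (Q x)).congr_deriv ?_
      rw [add_zero, div_one, rpow_one]
      ring
  have hnn : ∀ x ∈ Finset.univ, 0 ≤ Q x * W x y := fun x _ => mul_nonneg (hQ.1 x) (hW.1 x y)
  rcases (Finset.sum_nonneg hnn).eq_or_lt with h | h
  · have hz := fun x => (Finset.sum_eq_zero_iff_of_nonneg hnn).1 h.symm x (Finset.mem_univ x)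
    simp only [hz, zero_mul, Finset.sum_const_zero, neg_zero]
    refine (hasDerivAt_const (0 : ℝ) (0 : ℝ)).congr_of_eventuallyEq ?_
    filter_upwards [lt_mem_nhds (show (-1 : ℝ) < 0 by norm_num)] with ρ hρ
    have hρ' : 1 + ρ ≠ 0 := by linarith
    rw [Finset.sum_eq_zero, zero_rpow hρ']
    intro x _
    rcases mul_eq_zero.1 (hz x) with h | h
    · rw [h, zero_mul]
    · rw [h, zero_rpow (one_div_ne_zero hρ'), mul_zero]
  · have hu := HasDerivAt.fun_sum fun x (_ : x ∈ Finset.univ) => hinner x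
    have := hu.rpow ((hasDerivAt_id (0 : ℝ)).const_add 1) (by simpa using h)
    refine this.congr_deriv ?_
    simp only [add_zero, div_one, rpow_one, id, sub_self, rpow_zero, mul_one, one_mul]
    set p := ∑ x, Q x * W x y with hp
    have hlog : ∀ x, Q x * W x y * log (W x y / p)
        = Q x * W x y * log (W x y) - Q x * W x y * log p := by
      intro x
      rcases (hW.1 x y).eq_or_lt with hx | hx
      · simp [← hx]
      · rw [log_div hx.ne' h.ne']; ring
    simp only [hlog, Finset.sum_sub_distrib, ← Finset.sum_mul, ← hp, Finset.sum_neg_distrib]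
    ring

lemma hasDerivAt_Eo_zero (hW : IsChannel W) (hQ : IsDist Q) :
    HasDerivAt (fun ρ => Eo W ρ Q) (MI W Q) 0 := by
  have h := HasDerivAt.fun_sum fun y (_ : y ∈ Finset.univ) => hasDerivAt_gallager_term hW hQ y
  refine (h.log (gallager_pos hW hQ 0).ne').neg.congr_deriv ?_
  have h1 : ∑ y, (∑ x, Q x * W x y ^ (1 / (1 + (0 : ℝ)))) ^ (1 + (0 : ℝ)) = 1 := by
    simp only [add_zero, div_one, rpow_one]
    rw [Finset.sum_comm]
    simp [← Finset.mul_sum, hW.2, hQ.2]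
  rw [h1, div_one, Finset.sum_neg_distrib, neg_neg, MI, Finset.sum_comm]

lemma exists_exponent_pos [Nonempty X] (hW : IsChannel W) {R : ℝ} (hR : R < Capacity W) :
    ∃ ρ ∈ Set.Icc (0 : ℝ) 1, ∃ Q : X → ℝ, IsDist Q ∧ 0 < -ρ * R + Eo W ρ Q := by
  have hne : {v : ℝ | ∃ Q : X → ℝ, IsDist Q ∧ v = MI W Q}.Nonempty := by
    obtain ⟨x⟩ := ‹Nonempty X›
    exact ⟨_, Pi.single x 1, single_mem_stdSimplex ℝ x, rfl⟩
  obtain ⟨_, ⟨Q, hQ, rfl⟩, hlt⟩ := exists_lt_of_lt_csSup hne hR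
  have hd : HasDerivAt (fun ρ => -ρ * R + Eo W ρ Q) (-1 * R + MI W Q) 0 :=
    ((hasDerivAt_neg (0 : ℝ)).mul_const R).add (hasDerivAt_Eo_zero hW hQ)
  have hslope := (hasDerivAt_iff_tendsto_slope.1 hd).mono_left
    (nhdsWithin_mono (0 : ℝ) (show Set.Ioi (0 : ℝ) ⊆ {0}ᶜ from fun x hx => ne_of_gt hx))
  have hev := (hslope.eventually (lt_mem_nhds (show 0 < -1 * R + MI W Q by linarith))).and
    (Ioo_mem_nhdsGT (zero_lt_one' ℝ))
  obtain ⟨ρ, hρ, hρ01⟩ := hev.exists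
  refine ⟨ρ, ⟨hρ01.1.le, hρ01.2.le⟩, Q, hQ, ?_⟩
  rw [slope_def_field, Eo_zero hW hQ] at hρ
  have := (div_pos_iff_of_pos_right (by linarith [hρ01.1])).1 hρ
  linarith

end Exponent

/-- If `W` is singular at rate `R ∈ (R_cr, C)`, there is an `(N,R)` code with
maximal error probability at most `K₃ / √N · exp(-N E_r(R))`. -/
theorem statement4 {X Y : Type*} [Fintype X] [Fintype Y] [Nonempty X] [Nonempty Y]
    (W : X → Y → ℝ) (hW : IsChannel W) (hcr : Rcr W < Capacity W)
    (R : ℝ) (hR1 : Rcr W < R) (hR2 : R < Capacity W)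
    (hsingR : ∀ Q : X → ℝ, IsDist Q → ErQ W R Q = Er W R → Singular W Q) :
    ∃ K : ℝ, 0 < K ∧ ∀ N : ℕ, 0 < N →
      ∃ (f : Fin (nMsgs N R) → Fin N → X) (φ : (Fin N → Y) → Fin (nMsgs N R)),
        Pmax W f φ ≤ K / Real.sqrt N * Real.exp (-(N : ℝ) * Er W R) := by
  obtain ⟨ρ, hρ, Q, hQ, hmax⟩ := exists_isMaxOn_exponent hW R
  have hEr := Er_eq_of_isMax hρ hQ hmax
  have hs : Singular W Q := hsingR Q hQ <| by
    rw [hEr, ErQ_eq_of_isMax hρ fun ρ' hρ' => hmax ρ' hρ' Q hQ]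
  have hpos : 0 < -ρ * R + Eo W ρ Q := by
    obtain ⟨ρ', hρ', Q', hQ', h⟩ := exists_exponent_pos hW hR2
    exact h.trans_le (hmax ρ' hρ' Q' hQ')
  have hρ0 : 0 < ρ := by
    refine hρ.1.lt_of_ne ?_
    rintro rfl
    rw [Eo_zero hW hQ] at hpos
    simp at hpos
  have hρ1 : ρ < 1 := by
    refine hρ.2.lt_of_ne ?_
    rintro rfl
    refine Er_ne_of_Rcr_lt hW hR1 ?_
    have hgreat : IsGreatest {v : ℝ | ∃ Q : X → ℝ, IsDist Q ∧ v = Eo W 1 Q} (Eo W 1 Q) := by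
      refine ⟨⟨Q, hQ, rfl⟩, ?_⟩
      rintro _ ⟨Q', hQ', rfl⟩
      linarith [hmax 1 hρ Q' hQ']
    rw [hEr, hgreat.csSup_eq, neg_one_mul]
  have hp := isDist_outDist hW hQ
  obtain ⟨y₁, y₂, h₁, h₂, hlt⟩ : ∃ y₁ y₂, 0 < outDist W Q y₁ ∧ 0 < outDist W Q y₂ ∧
      supportMass W Q y₂ < supportMass W Q y₁ := by
    by_contra! hcon
    obtain ⟨y₀, -, hy₀⟩ := Finset.exists_lt_of_sum_lt (s := Finset.univ)
      (f := fun _ : Y => (0 : ℝ)) (g := outDist W Q) (by simp [hp.2])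
    have hlin : ∀ ρ' : ℝ, 0 ≤ ρ' → Eo W ρ' Q = -(ρ' * log (supportMass W Q y₀)) := by
      intro ρ' hρ'
      have hconst : ∀ y, outDist W Q y * supportMass W Q y ^ ρ'
          = outDist W Q y * supportMass W Q y₀ ^ ρ' := by
        intro y
        rcases (hp.1 y).eq_or_lt with h | h
        · simp [← h]
        · rw [le_antisymm (hcon y₀ y hy₀ h) (hcon y y₀ h hy₀)]
      rw [Eo_eq_of_singular hW hQ hs hρ']
      simp only [hconst]
      rw [← Finset.sum_mul, hp.2, one_mul, log_rpow (supportMass_pos hW hQ hy₀)]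
    have h1 := hmax 1 (by simp) Q hQ
    rw [hlin 1 zero_le_one, hlin ρ hρ.1] at h1
    rw [hlin ρ hρ.1] at hpos
    nlinarith
  obtain ⟨K, hK, hbound⟩ := exists_sum_min_one_le hp (supportMass_nonneg hQ)
    (fun y => supportMass_pos hW hQ) h₁ h₂ hlt hρ0 hρ1 R
  rw [← Eo_eq_of_singular hW hQ hs hρ.1, ← hEr] at hbound
  refine ⟨12 * K, by positivity, fun N hN => ?_⟩
  have hM : 0 < nMsgs N R := Nat.ceil_pos.2 (exp_pos _)
  rcases Nat.lt_or_ge 1 (nMsgs N R) with hM1 | hM1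
  · have hgt : 1 < exp (N * R) := by
      by_contra! hle
      exact hM1.not_ge (Nat.ceil_le.2 (by simpa using hle))
    have hle : (nMsgs N R : ℝ) ≤ 2 * exp (N * R) := by
      have := Nat.ceil_lt_add_one (exp_pos (N * R)).le
      unfold nMsgs
      linarith
    obtain ⟨f, φ, hf⟩ := exists_memoryless_code hW hQ hM (exp_pos _).le hle (hbound N hN)
    exact ⟨f, φ, hf.trans_eq (by ring)⟩
  · have hsub : Subsingleton (Fin (nMsgs N R)) := Fin.subsingleton_iff_le_one.2 hM1
    have hne : Nonempty (Fin (nMsgs N R)) := ⟨⟨0, hM⟩⟩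
    refine ⟨fun _ _ => Classical.arbitrary X, fun _ => ⟨0, hM⟩, ciSup_le fun m => ?_⟩
    rw [Finset.sum_eq_zero fun y _ => by rw [if_neg (not_not.2 (Subsingleton.elim _ _)), mul_zero]]
    positivity

end RCB
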